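/- arXiv:1308.2455 — 5 statements merged into one kernel-verified Lean document; each statement's English description precedes it below -/
import Mathlib

section
/- Let c > 0, let 𝒜⁰ : ℝ × ℝ³ → ℝ and 𝓐 : ℝ × ℝ³ → ℝ³ be C², let θ : ℝ × ℝ³ → ℝ be C¹, and let v : ℝ × ℝ³ → ℝ³ satisfy |v| < c pointwise with γ = (1 − |v|²/c²)^{−1/2}. With ℰ = −∇𝒜⁰ − c⁻¹∂_t𝓐 and ℬ = ∇×𝓐, if the equation of motion ℰ + (v/c)×ℬ = −(cγ)⁻¹ ∇θ holds at every point, then c⁻¹ ∂_t(𝓐·ℬ) + ∇·(𝒜⁰ℬ + ℰ×𝓐) = 2 (cγ)⁻¹ ℬ·∇θ at every point. -/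
open MeasureTheory

noncomputable section

abbrev V3 := Fin 3 → ℝ

/-- Euclidean dot product on ℝ³. -/
def dot3 (a b : V3) : ℝ := ∑ i, a i * b i

/-- Cross product on ℝ³. -/
def cross3 (a b : V3) : V3 := fun i => a (i + 1) * b (i + 2) - a (i + 2) * b (i + 1)

/-- Time derivative ∂_t of a scalar function on ℝ × ℝ³. -/
def pdt (f : ℝ × V3 → ℝ) (p : ℝ × V3) : ℝ := fderiv ℝ f p ((1 : ℝ), (0 : V3))

/-- Spatial derivative ∂_j of a scalar function on ℝ × ℝ³. -/
def pdx (j : Fin 3) (f : ℝ × V3 → ℝ) (p : ℝ × V3) : ℝ :=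
  fderiv ℝ f p ((0 : ℝ), Pi.single j 1)

/-- Spatial gradient. -/
def grad3 (f : ℝ × V3 → ℝ) (p : ℝ × V3) : V3 := fun j => pdx j f p

/-- Spatial curl. -/
def curl3 (A : ℝ × V3 → V3) (p : ℝ × V3) : V3 := fun i =>
  pdx (i + 1) (fun q => A q (i + 2)) p - pdx (i + 2) (fun q => A q (i + 1)) p

/-- Spatial divergence. -/
def div3 (A : ℝ × V3 → V3) (p : ℝ × V3) : ℝ := ∑ j, pdx j (fun q => A q j) p

/-- ℰ = −∇𝒜⁰ − c⁻¹ ∂_t 𝓐. -/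
def Efield (c : ℝ) (A0 : ℝ × V3 → ℝ) (A : ℝ × V3 → V3) (p : ℝ × V3) : V3 := fun i =>
  -grad3 A0 p i - c⁻¹ * fderiv ℝ (fun q => A q i) p ((1 : ℝ), (0 : V3))

/-- ℬ = ∇×𝓐. -/
def Bfield (A : ℝ × V3 → V3) (p : ℝ × V3) : V3 := curl3 A p

/-- The Lorentz factor γ = (1 − |v|²/c²)^(−1/2). -/
def gamma3 (c : ℝ) (v : ℝ × V3 → V3) (p : ℝ × V3) : ℝ :=
  (Real.sqrt (1 - dot3 (v p) (v p) / c ^ 2))⁻¹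

/-!
Faraday's law `∇×ℰ = -c⁻¹ ∂_t ℬ` and `∇·ℬ = 0` hold because second partial derivatives commute.
By the product rules, `∇·(𝒜⁰ℬ + ℰ×𝓐) = ∇𝒜⁰·ℬ - c⁻¹ 𝓐·∂_tℬ - ℰ·ℬ`. Adding `c⁻¹ ∂_t(𝓐·ℬ)` cancels
the term in `∂_tℬ` and leaves `(∇𝒜⁰ + c⁻¹ ∂_t𝓐)·ℬ - ℰ·ℬ = -2 ℰ·ℬ`. Since `v × ℬ` is orthogonal to
`ℬ`, only the gradient part of the equation of motion contributes to `ℰ·ℬ`.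
-/

/-- The time derivative `∂_t A` of a vector field on `ℝ × ℝ³`, taken componentwise. -/
def pdtVec (A : ℝ × V3 → V3) (p : ℝ × V3) : V3 := fun i => pdt (fun q => A q i) p

section VectorAlgebra

open Matrix

lemma dot3_eq_dotProduct (a b : V3) : dot3 a b = a ⬝ᵥ b := rfl

lemma cross3_eq_crossProduct (a b : V3) : cross3 a b = a ⨯₃ b := by
  ext i
  fin_cases i <;> simp [cross3, cross_apply]

end VectorAlgebra

section SecondDerivative

variable {𝕜 E F : Type*} [RCLike 𝕜] [NormedAddCommGroup E] [NormedSpace 𝕜 E]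
  [NormedAddCommGroup F] [NormedSpace 𝕜 F] {f : E → F} {x : E}

lemma differentiableAt_fderiv_of_contDiffAt_two (hf : ContDiffAt 𝕜 2 f x) :
    DifferentiableAt 𝕜 (fderiv 𝕜 f) x :=
  (hf.fderiv_right (m := 1) (by norm_num)).differentiableAt one_ne_zero

lemma differentiableAt_fderiv_apply (hf : ContDiffAt 𝕜 2 f x) (v : E) :
    DifferentiableAt 𝕜 (fun y => fderiv 𝕜 f y v) x :=
  (differentiableAt_fderiv_of_contDiffAt_two hf).clm_apply (differentiableAt_const v)

lemma fderiv_fderiv_apply_comm (hf : ContDiffAt 𝕜 2 f x) (v w : E) :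
    fderiv 𝕜 (fun y => fderiv 𝕜 f y v) x w = fderiv 𝕜 (fun y => fderiv 𝕜 f y w) x v := by
  have hf' := differentiableAt_fderiv_of_contDiffAt_two hf
  have hsymm : IsSymmSndFDerivAt 𝕜 f x := hf.isSymmSndFDerivAt (by simp)
  simpa [fderiv_clm_apply hf' (differentiableAt_const _)] using hsymm.eq w v

end SecondDerivative

section ScalarDerivatives

variable {f g : ℝ × V3 → ℝ} {p : ℝ × V3}

lemma pdt_mul (hf : DifferentiableAt ℝ f p) (hg : DifferentiableAt ℝ g p) :
    pdt (fun q => f q * g q) p = pdt f p * g p + f p * pdt g p := by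
  simp only [pdt, fderiv_fun_mul hf hg, add_apply,
    smul_apply, smul_eq_mul]
  ring

lemma pdt_sub (hf : DifferentiableAt ℝ f p) (hg : DifferentiableAt ℝ g p) :
    pdt (fun q => f q - g q) p = pdt f p - pdt g p := by
  simp only [pdt, fderiv_fun_sub hf hg, sub_apply]

lemma pdx_mul (j : Fin 3) (hf : DifferentiableAt ℝ f p) (hg : DifferentiableAt ℝ g p) :
    pdx j (fun q => f q * g q) p = pdx j f p * g p + f p * pdx j g p := by
  simp only [pdx, fderiv_fun_mul hf hg, add_apply,
    smul_apply, smul_eq_mul]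
  ring

lemma pdx_add (j : Fin 3) (hf : DifferentiableAt ℝ f p) (hg : DifferentiableAt ℝ g p) :
    pdx j (fun q => f q + g q) p = pdx j f p + pdx j g p := by
  simp only [pdx, fderiv_fun_add hf hg, add_apply]

lemma pdx_sub (j : Fin 3) (hf : DifferentiableAt ℝ f p) (hg : DifferentiableAt ℝ g p) :
    pdx j (fun q => f q - g q) p = pdx j f p - pdx j g p := by
  simp only [pdx, fderiv_fun_sub hf hg, sub_apply]

lemma pdx_const_mul (j : Fin 3) (a : ℝ) (hf : DifferentiableAt ℝ f p) :
    pdx j (fun q => a * f q) p = a * pdx j f p := by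
  simp only [pdx, fderiv_const_mul hf, smul_apply, smul_eq_mul]

lemma pdx_pdx_comm (i j : Fin 3) (hf : ContDiffAt ℝ 2 f p) :
    pdx i (pdx j f) p = pdx j (pdx i f) p :=
  fderiv_fderiv_apply_comm hf _ _

lemma pdx_pdt_comm (j : Fin 3) (hf : ContDiffAt ℝ 2 f p) :
    pdx j (pdt f) p = pdt (pdx j f) p :=
  fderiv_fderiv_apply_comm hf _ _

lemma differentiableAt_pdx (j : Fin 3) (hf : ContDiffAt ℝ 2 f p) :
    DifferentiableAt ℝ (pdx j f) p :=
  differentiableAt_fderiv_apply hf _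

lemma differentiableAt_grad3 (hf : ContDiffAt ℝ 2 f p) : DifferentiableAt ℝ (grad3 f) p :=
  differentiableAt_pi.2 fun j => differentiableAt_pdx j hf

lemma curl3_grad3 (hf : ContDiffAt ℝ 2 f p) : curl3 (grad3 f) p = 0 :=
  funext fun _ => sub_eq_zero.2 (pdx_pdx_comm _ _ hf)

end ScalarDerivatives

section VectorDerivatives

variable {A B : ℝ × V3 → V3} {f : ℝ × V3 → ℝ} {p : ℝ × V3}

lemma pdt_dot3 (hA : DifferentiableAt ℝ A p) (hB : DifferentiableAt ℝ B p) :
    pdt (fun q => dot3 (A q) (B q)) p = dot3 (pdtVec A p) (B p) + dot3 (A p) (pdtVec B p) := by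
  have hA' := differentiableAt_pi.1 hA
  have hB' := differentiableAt_pi.1 hB
  have hsum : pdt (fun q => dot3 (A q) (B q)) p = ∑ i, pdt (fun q => A q i * B q i) p := by
    simp only [pdt, dot3, fderiv_fun_sum fun i _ => (hA' i).fun_mul (hB' i),
      sum_apply]
  rw [hsum]
  simp only [pdt_mul (hA' _) (hB' _), Finset.sum_add_distrib, dot3, pdtVec]

lemma div3_add (hA : DifferentiableAt ℝ A p) (hB : DifferentiableAt ℝ B p) :
    div3 (fun q => A q + B q) p = div3 A p + div3 B p := by
  simp only [div3, Pi.add_apply,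
    pdx_add _ (differentiableAt_pi.1 hA _) (differentiableAt_pi.1 hB _), Finset.sum_add_distrib]

lemma div3_smul (hf : DifferentiableAt ℝ f p) (hA : DifferentiableAt ℝ A p) :
    div3 (fun q => f q • A q) p = dot3 (grad3 f p) (A p) + f p * div3 A p := by
  simp only [div3, Pi.smul_apply, smul_eq_mul, pdx_mul _ hf (differentiableAt_pi.1 hA _),
    Finset.sum_add_distrib, dot3, grad3, Finset.mul_sum]

lemma differentiableAt_cross3 (hA : DifferentiableAt ℝ A p) (hB : DifferentiableAt ℝ B p) :
    DifferentiableAt ℝ (fun q => cross3 (A q) (B q)) p := by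
  have hA' := differentiableAt_pi.1 hA
  have hB' := differentiableAt_pi.1 hB
  exact differentiableAt_pi.2 fun i =>
    ((hA' (i + 1)).mul (hB' (i + 2))).sub ((hA' (i + 2)).mul (hB' (i + 1)))

lemma div3_cross3 (hA : DifferentiableAt ℝ A p) (hB : DifferentiableAt ℝ B p) :
    div3 (fun q => cross3 (A q) (B q)) p
      = dot3 (curl3 A p) (B p) - dot3 (A p) (curl3 B p) := by
  have hA' := differentiableAt_pi.1 hA
  have hB' := differentiableAt_pi.1 hB
  simp only [div3, cross3, pdx_sub _ ((hA' _).fun_mul (hB' _)) ((hA' _).fun_mul (hB' _)),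
    pdx_mul _ (hA' _) (hB' _), dot3, curl3, Fin.sum_univ_three, Fin.isValue, Fin.reduceAdd,
    zero_add]
  ring

lemma curl3_add (hA : DifferentiableAt ℝ A p) (hB : DifferentiableAt ℝ B p) :
    curl3 (fun q => A q + B q) p = curl3 A p + curl3 B p := by
  ext i
  simp only [curl3, Pi.add_apply,
    pdx_add _ (differentiableAt_pi.1 hA _) (differentiableAt_pi.1 hB _)]
  ring

lemma curl3_const_smul (a : ℝ) (hA : DifferentiableAt ℝ A p) :
    curl3 (fun q => a • A q) p = a • curl3 A p := by
  ext i
  simp only [curl3, Pi.smul_apply, smul_eq_mul, pdx_const_mul _ a (differentiableAt_pi.1 hA _),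
    mul_sub]

lemma differentiableAt_pdtVec (hA : ContDiffAt ℝ 2 A p) : DifferentiableAt ℝ (pdtVec A) p :=
  differentiableAt_pi.2 fun i => differentiableAt_fderiv_apply (contDiffAt_pi.1 hA i) _

lemma differentiableAt_curl3 (hA : ContDiffAt ℝ 2 A p) : DifferentiableAt ℝ (curl3 A) p :=
  differentiableAt_pi.2 fun _ =>
    (differentiableAt_pdx _ (contDiffAt_pi.1 hA _)).sub
      (differentiableAt_pdx _ (contDiffAt_pi.1 hA _))

lemma div3_curl3 (hA : ContDiffAt ℝ 2 A p) : div3 (curl3 A) p = 0 := by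
  have hA' := contDiffAt_pi.1 hA
  have hcurl (j : Fin 3) : pdx j (fun q => curl3 A q j) p
      = pdx j (pdx (j + 1) fun q => A q (j + 2)) p
        - pdx j (pdx (j + 2) fun q => A q (j + 1)) p :=
    pdx_sub j (differentiableAt_pdx _ (hA' _)) (differentiableAt_pdx _ (hA' _))
  simp only [div3, hcurl, Fin.sum_univ_three, Fin.isValue, Fin.reduceAdd, zero_add]
  rw [pdx_pdx_comm 0 1 (hA' 2), pdx_pdx_comm 0 2 (hA' 1), pdx_pdx_comm 1 2 (hA' 0)]
  ring

lemma curl3_pdtVec (hA : ContDiffAt ℝ 2 A p) : curl3 (pdtVec A) p = pdtVec (curl3 A) p := by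
  have hA' := contDiffAt_pi.1 hA
  ext i
  calc curl3 (pdtVec A) p i
      = pdt (pdx (i + 1) fun q => A q (i + 2)) p - pdt (pdx (i + 2) fun q => A q (i + 1)) p :=
        congrArg₂ (· - ·) (pdx_pdt_comm _ (hA' _)) (pdx_pdt_comm _ (hA' _))
    _ = pdtVec (curl3 A) p i :=
        (pdt_sub (differentiableAt_pdx _ (hA' _)) (differentiableAt_pdx _ (hA' _))).symm

end VectorDerivatives

section Potentials

variable {c : ℝ} {A0 : ℝ × V3 → ℝ} {A : ℝ × V3 → V3} {p : ℝ × V3}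

lemma Efield_eq : Efield c A0 A = fun q => (-1 : ℝ) • grad3 A0 q + (-c⁻¹) • pdtVec A q := by
  ext q i
  simp only [Efield, pdtVec, pdt, Pi.add_apply, Pi.smul_apply, smul_eq_mul]
  ring

lemma differentiableAt_Efield (hA0 : ContDiffAt ℝ 2 A0 p) (hA : ContDiffAt ℝ 2 A p) :
    DifferentiableAt ℝ (Efield c A0 A) p := by
  rw [Efield_eq]
  exact ((differentiableAt_grad3 hA0).fun_const_smul (-1 : ℝ)).add
    ((differentiableAt_pdtVec hA).fun_const_smul (-c⁻¹))

lemma curl3_Efield (hA0 : ContDiffAt ℝ 2 A0 p) (hA : ContDiffAt ℝ 2 A p) :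
    curl3 (Efield c A0 A) p = -c⁻¹ • pdtVec (Bfield A) p := by
  have hgrad := differentiableAt_grad3 hA0
  have hdt := differentiableAt_pdtVec hA
  rw [Efield_eq, curl3_add (hgrad.fun_const_smul _) (hdt.fun_const_smul _),
    curl3_const_smul _ hgrad, curl3_const_smul _ hdt, curl3_grad3 hA0, curl3_pdtVec hA,
    smul_zero, zero_add]
  rfl

lemma div3_helicity_flux (hA0 : ContDiffAt ℝ 2 A0 p) (hA : ContDiffAt ℝ 2 A p) :
    div3 (fun q => A0 q • Bfield A q + cross3 (Efield c A0 A q) (A q)) p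
      = dot3 (grad3 A0 p) (Bfield A p) - c⁻¹ * dot3 (pdtVec (Bfield A) p) (A p)
        - dot3 (Efield c A0 A p) (Bfield A p) := by
  have hA0' : DifferentiableAt ℝ A0 p := hA0.differentiableAt two_ne_zero
  have hA' : DifferentiableAt ℝ A p := hA.differentiableAt two_ne_zero
  have hB : DifferentiableAt ℝ (Bfield A) p := differentiableAt_curl3 hA
  have hE : DifferentiableAt ℝ (Efield c A0 A) p := differentiableAt_Efield hA0 hA
  have hdivB : div3 (Bfield A) p = 0 := div3_curl3 hA
  have hcurlA : curl3 A p = Bfield A p := rfl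
  rw [div3_add (hA0'.fun_smul hB) (differentiableAt_cross3 hE hA'), div3_smul hA0' hB,
    div3_cross3 hE hA', hdivB, curl3_Efield hA0 hA, hcurlA]
  simp only [dot3_eq_dotProduct, smul_dotProduct, smul_eq_mul]
  ring

theorem helicity_current_divergence (hA0 : ContDiffAt ℝ 2 A0 p) (hA : ContDiffAt ℝ 2 A p) :
    c⁻¹ * pdt (fun q => dot3 (A q) (Bfield A q)) p
        + div3 (fun q => A0 q • Bfield A q + cross3 (Efield c A0 A q) (A q)) p
      = -2 * dot3 (Efield c A0 A p) (Bfield A p) := by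
  have hB : DifferentiableAt ℝ (Bfield A) p := differentiableAt_curl3 hA
  have hEB : dot3 (Efield c A0 A p) (Bfield A p)
      = -dot3 (grad3 A0 p) (Bfield A p) - c⁻¹ * dot3 (pdtVec A p) (Bfield A p) := by
    simp only [Efield_eq, dot3_eq_dotProduct, add_dotProduct, smul_dotProduct, smul_eq_mul]
    ring
  have hcomm : dot3 (A p) (pdtVec (Bfield A) p) = dot3 (pdtVec (Bfield A) p) (A p) :=
    dotProduct_comm _ _
  rw [pdt_dot3 (hA.differentiableAt two_ne_zero) hB, div3_helicity_flux hA0 hA, hcomm]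
  linear_combination hEB

/-- Here `k` stands for `γ⁻¹` and `g` for `∇θ`, and the equation of motion has been multiplied
by `c`. -/
theorem helicity_current_barotropic_general (hc : c ≠ 0) (hA0 : ContDiffAt ℝ 2 A0 p)
    (hA : ContDiffAt ℝ 2 A p) {u g : V3} {k : ℝ}
    (heqm : c • Efield c A0 A p + cross3 u (Bfield A p) = -k • g) :
    c⁻¹ * pdt (fun q => dot3 (A q) (Bfield A q)) p
        + div3 (fun q => A0 q • Bfield A q + cross3 (Efield c A0 A q) (A q)) p
      = 2 * (c⁻¹ * k) * dot3 (Bfield A p) g := by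
  have hBu : dot3 (Bfield A p) (cross3 u (Bfield A p)) = 0 := by
    rw [dot3_eq_dotProduct, cross3_eq_crossProduct, dot_cross_self]
  have hBE : c * dot3 (Bfield A p) (Efield c A0 A p) = -k * dot3 (Bfield A p) g := by
    calc c * dot3 (Bfield A p) (Efield c A0 A p)
        = dot3 (Bfield A p) (c • Efield c A0 A p + cross3 u (Bfield A p)) := by
          simp only [dot3_eq_dotProduct, dotProduct_add, dotProduct_smul, smul_eq_mul] at hBu ⊢
          rw [hBu, add_zero]
      _ = -k * dot3 (Bfield A p) g := by
          rw [heqm, dot3_eq_dotProduct, dotProduct_smul, smul_eq_mul, dot3_eq_dotProduct]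
  have hcomm : dot3 (Efield c A0 A p) (Bfield A p) = dot3 (Bfield A p) (Efield c A0 A p) :=
    dotProduct_comm _ _
  rw [helicity_current_divergence hA0 hA, hcomm]
  field_simp
  linear_combination -hBE

end Potentials

/-- If the equation of motion ℰ + (v/c)×ℬ = −(cγ)⁻¹∇θ holds everywhere, then
    c⁻¹∂_t(𝓐·ℬ) + ∇·(𝒜⁰ℬ + ℰ×𝓐) = 2(cγ)⁻¹ ℬ·∇θ everywhere. -/
theorem helicity_current_barotropic (c : ℝ) (hc : 0 < c)
    (A0 : ℝ × V3 → ℝ) (A : ℝ × V3 → V3) (θ : ℝ × V3 → ℝ) (v : ℝ × V3 → V3)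
    (hA0 : ContDiff ℝ 2 A0) (hA : ContDiff ℝ 2 A) (hθ : ContDiff ℝ 1 θ)
    (hv : ∀ p, Real.sqrt (dot3 (v p) (v p)) < c)
    (heqm : ∀ p, ∀ i : Fin 3,
      Efield c A0 A p i + cross3 (v p) (Bfield A p) i / c
        = -((c * gamma3 c v p)⁻¹) * grad3 θ p i) :
    ∀ p : ℝ × V3,
      c⁻¹ * pdt (fun q => dot3 (A q) (Bfield A q)) p
        + div3 (fun q i => A0 q * Bfield A q i + cross3 (Efield c A0 A q) (A q) i) p
      = 2 * (c * gamma3 c v p)⁻¹ * dot3 (Bfield A p) (grad3 θ p) := by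
  intro p
  rw [mul_inv]
  refine helicity_current_barotropic_general hc.ne' hA0.contDiffAt hA.contDiffAt
    (u := v p) (funext fun i => ?_)
  simp only [Pi.add_apply, Pi.smul_apply, smul_eq_mul]
  linear_combination c * heqm p i
    - (cross3 (v p) (Bfield A p) i + (gamma3 c v p)⁻¹ * grad3 θ p i) * mul_inv_cancel₀ hc.ne'
end
end

section
/- Let U : ℝ⁴ → ℝ⁴ be a C¹ vector field generating a global flow φ_s : ℝ⁴ → ℝ⁴ that is jointly C¹ in (s, x) with φ₀ = id and ∂_s φ_s(x) = U(φ_s(x)). Let P : ℝ⁴ → ℝ⁴ be a C¹ covector field and let γ₀ : [0,1] → ℝ⁴ be a C¹ loop (γ₀(0) = γ₀(1)). Then the function s ↦ ∮_{φ_s ∘ γ₀} P is differentiable, and its derivative equals ∮_{φ_s ∘ γ₀} (L_U P), where (L_U P)_ν = Σ_μ (U^μ ∂_μ P_ν + P_μ ∂_ν U^μ). -/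
open MeasureTheory

noncomputable section

abbrev V4 := Fin 4 → ℝ

/-- Partial derivative ∂_μ of a scalar function on ℝ⁴. -/
def pd4 (μ : Fin 4) (f : V4 → ℝ) (x : V4) : ℝ := fderiv ℝ f x (Pi.single μ 1)

/-- Circulation ∮_γ P = ∫₀¹ P_μ(γ(τ)) (dγ^μ/dτ) dτ of a covector field along a loop. -/
def circulation (P : V4 → V4) (γ : ℝ → V4) : ℝ :=
  ∫ τ in (0:ℝ)..1, ∑ μ, P (γ τ) μ * deriv (fun t => γ t μ) τ

/-- Lie derivative of a covector field: (L_U P)_ν = U^μ ∂_μ P_ν + P_μ ∂_ν U^μ. -/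
def lieDeriv1 (U P : V4 → V4) (x : V4) : V4 := fun ν =>
  ∑ μ, (U x μ * pd4 μ (fun y => P y ν) x + P x μ * pd4 ν (fun y => U y μ) x)

/-!
In coordinate-free form, the integrand of the circulation along the moved curve `Γ s = φ s ∘ γ` is
`P (Γ s t) (w s t)`, where `w = ∂ₜ Γ`. Since `∂ₛ Γ = U ∘ Γ`, exchanging the two partial derivatives
gives the variational equation `∂ₛ w = DU (Γ) w`, so by the product rule the `s`-derivative of the
integrand is `DP (Γ) (U (Γ)) w + P (Γ) (DU (Γ) w) = (L_U P) (Γ) w`, which is continuous; now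
differentiate under the integral sign. As `U` is only `C¹`, `Γ` need not be `C²`; the exchange of
derivatives rests on `∂ₜ ∂ₛ Γ = DU (Γ) w` being continuous.
-/

section Calculus

open Filter Metric
open scoped Topology

variable {𝕜 E : Type*} [RCLike 𝕜] [NormedAddCommGroup E] [NormedSpace 𝕜 E]

theorem norm_slope_sub_le_of_norm_hasDerivAt_sub_le {f f' : 𝕜 → E} {k : E} {x h : 𝕜} {δ C : ℝ}
    (hf : ∀ y ∈ ball x δ, HasDerivAt f (f' y) y)
    (hC : ∀ y ∈ ball x δ, ‖f' y - k‖ ≤ C) (hh : ‖h‖ < δ) (hh0 : h ≠ 0) :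
    ‖h⁻¹ • (f (x + h) - f x) - k‖ ≤ C := by
  have hmvt : ‖f (x + h) - (x + h) • k - (f x - x • k)‖ ≤ C * ‖x + h - x‖ :=
    (convex_ball x δ).norm_image_sub_le_of_norm_hasDerivWithin_le
      (fun y hy => ((hf y hy).sub ((hasDerivAt_id y).smul_const k)).hasDerivWithinAt)
      (by simpa only [one_smul] using hC) (mem_ball_self ((norm_nonneg h).trans_lt hh))
      (by simpa using hh)
  have hslope : h⁻¹ • (f (x + h) - f x) - k = h⁻¹ • (f (x + h) - (x + h) • k - (f x - x • k)) := by
    simp only [smul_sub, add_smul, smul_add, inv_smul_smul₀ hh0]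
    abel
  rw [add_sub_cancel_left] at hmvt
  rw [hslope, norm_smul, norm_inv]
  exact (inv_mul_le_iff₀ (norm_pos_iff.2 hh0)).2 (hmvt.trans_eq (mul_comm _ _))

/-- The difference quotients of `f` in `t` converge to `ft`, and their `s`-derivatives converge to
`fst` locally uniformly. -/
theorem hasDerivAt_partial_of_continuousAt_mixed_partial
    {f fs ft fst : 𝕜 → 𝕜 → E} {s₀ t₀ : 𝕜}
    (hfs : ∀ s t, HasDerivAt (fun s => f s t) (fs s t) s)
    (hft : ∀ s, HasDerivAt (f s) (ft s t₀) t₀)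
    (hfst : ∀ s t, HasDerivAt (fs s) (fst s t) t)
    (hcont : ContinuousAt (Function.uncurry fst) (s₀, t₀)) :
    HasDerivAt (fun s => ft s t₀) (fst s₀ t₀) s₀ := by
  refine hasDerivAt_of_tendstoUniformlyOnFilter (l := 𝓝[≠] (0 : 𝕜))
    (f := fun h s => h⁻¹ • (f s (t₀ + h) - f s t₀)) (g' := fun s => fst s t₀)
    (f' := fun h s => h⁻¹ • (fs s (t₀ + h) - fs s t₀)) ?_
    (.of_forall fun p => ((hfs p.2 (t₀ + p.1)).sub (hfs p.2 t₀)).const_smul p.1⁻¹)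
    (.of_forall fun s => (hft s).tendsto_slope_zero)
  rw [Metric.tendstoUniformlyOnFilter_iff]
  intro ε hε
  obtain ⟨δ, hδ, hclose⟩ := Metric.continuousAt_iff.1 hcont (ε / 4) (by positivity)
  have hosc : ∀ s ∈ ball s₀ δ, ∀ t ∈ ball t₀ δ, ‖fst s t - fst s t₀‖ ≤ ε / 2 := by
    intro s hs t ht
    have hst := hclose (x := (s, t)) (max_lt hs ht)
    have hst₀ := hclose (x := (s, t₀)) (max_lt hs (mem_ball_self hδ))
    rw [← dist_eq_norm]
    exact (dist_triangle_right _ _ (fst s₀ t₀)).trans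
      ((add_lt_add hst hst₀).le.trans_eq (by ring))
  have hsmall : ∀ᶠ h in 𝓝[≠] (0 : 𝕜), ‖h‖ < δ ∧ h ≠ 0 :=
    (eventually_nhdsWithin_of_eventually_nhds
      (by simpa using eventually_norm_sub_lt (0 : 𝕜) hδ)).and eventually_mem_nhdsWithin
  filter_upwards [hsmall.prod_mk (ball_mem_nhds s₀ hδ)] with ⟨h, s⟩ ⟨⟨hh, hh0⟩, hs⟩
  rw [dist_comm, dist_eq_norm]
  exact (norm_slope_sub_le_of_norm_hasDerivAt_sub_le (fun t _ => hfst s t) (hosc s hs) hh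
    hh0).trans_lt (half_lt_self hε)

theorem hasDerivAt_intervalIntegral_of_continuous_deriv [NormedSpace ℝ E]
    {μ : Measure ℝ} [IsLocallyFiniteMeasure μ] {f f' : 𝕜 → ℝ → E} (hf : ∀ s, Continuous (f s))
    (hf' : Continuous (Function.uncurry f'))
    (hderiv : ∀ s t, HasDerivAt (fun s => f s t) (f' s t) s) (a b : ℝ) (s₀ : 𝕜) :
    HasDerivAt (fun s => ∫ t in a..b, f s t ∂μ) (∫ t in a..b, f' s₀ t ∂μ) s₀ := by
  obtain ⟨C, hC⟩ := ((isCompact_closedBall s₀ 1).prod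
    (isCompact_uIcc (a := a) (b := b))).exists_bound_of_continuousOn hf'.continuousOn
  have hf'_s₀ : Continuous (f' s₀) := hf'.comp (Continuous.prodMk_right s₀)
  exact (intervalIntegral.hasDerivAt_integral_of_dominated_loc_of_deriv_le
    (closedBall_mem_nhds s₀ one_pos) (.of_forall fun s => (hf s).aestronglyMeasurable)
    ((hf s₀).intervalIntegrable a b) hf'_s₀.aestronglyMeasurable
    (.of_forall fun t ht s hs => hC (s, t) ⟨hs, Set.uIoc_subset_uIcc ht⟩)
    intervalIntegrable_const (.of_forall fun t _ s _ => hderiv s t)).2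

end Calculus

section Curves

variable {𝕜 X Y E : Type*} [NontriviallyNormedField 𝕜] [NormedAddCommGroup X] [NormedSpace 𝕜 X]
  [NormedAddCommGroup Y] [NormedSpace 𝕜 Y] [NormedAddCommGroup E] [NormedSpace 𝕜 E]

theorem differentiable_of_contDiff_uncurry {Γ : X → Y → E}
    (hΓ : ContDiff 𝕜 1 (Function.uncurry Γ)) (x : X) : Differentiable 𝕜 (Γ x) :=
  (hΓ.comp (contDiff_prodMk_right x)).differentiable one_ne_zero

theorem continuous_deriv_of_contDiff_uncurry {Γ : X → 𝕜 → E}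
    (hΓ : ContDiff 𝕜 1 (Function.uncurry Γ)) : Continuous fun q : X × 𝕜 => deriv (Γ q.1) q.2 :=
  have hΓ' : ContDiff 𝕜 1 (Function.uncurry fun (q : X × 𝕜) t => Γ q.1 t) :=
    hΓ.comp ((contDiff_fst.comp contDiff_fst).prodMk contDiff_snd)
  (hΓ'.fderiv_apply contDiff_snd (contDiff_const (c := 1)) (zero_add 1).le).continuous

end Curves

section OneForm

variable {𝕜 E F : Type*} [RCLike 𝕜] [NormedAddCommGroup E] [NormedSpace 𝕜 E]
  [NormedAddCommGroup F] [NormedSpace 𝕜 F] {U : E → E} {P : E → E →L[𝕜] F} {Γ : 𝕜 → 𝕜 → E}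

/-- The Lie derivative `L_U P` of an `F`-valued 1-form `P` along a vector field `U`, as the linear
map `v ↦ (D P x (U x)) v + P x (D U x v)`; `lieDeriv1` is its expression in coordinates. -/
def lieDerivOneForm (U : E → E) (P : E → E →L[𝕜] F) (x : E) : E →L[𝕜] F :=
  fderiv 𝕜 P x (U x) + (P x).comp (fderiv 𝕜 U x)

theorem continuous_lieDerivOneForm (hU : ContDiff 𝕜 1 U) (hP : ContDiff 𝕜 1 P) :
    Continuous (lieDerivOneForm U P) :=
  ((hP.continuous_fderiv one_ne_zero).clm_apply hU.continuous).add
    (hP.continuous.clm_comp (hU.continuous_fderiv one_ne_zero))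

theorem hasDerivAt_deriv_of_comoving (hU : ContDiff 𝕜 1 U)
    (hΓ : ContDiff 𝕜 1 (Function.uncurry Γ))
    (hflow : ∀ s t, HasDerivAt (fun s => Γ s t) (U (Γ s t)) s) (s t : 𝕜) :
    HasDerivAt (fun s => deriv (Γ s) t) (fderiv 𝕜 U (Γ s t) (deriv (Γ s) t)) s := by
  have htangent : ∀ s t, HasDerivAt (Γ s) (deriv (Γ s) t) t :=
    fun s t => (differentiable_of_contDiff_uncurry hΓ s t).hasDerivAt
  refine hasDerivAt_partial_of_continuousAt_mixed_partial
    (fst := fun s t => fderiv 𝕜 U (Γ s t) (deriv (Γ s) t)) hflow (htangent · t) (fun s t => ?_) ?_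
  · exact (hU.differentiable one_ne_zero _).hasFDerivAt.comp_hasDerivAt t (htangent s t)
  · exact (((hU.continuous_fderiv one_ne_zero).comp hΓ.continuous).clm_apply
      (continuous_deriv_of_contDiff_uncurry hΓ)).continuousAt

theorem hasDerivAt_oneForm_apply_deriv_of_comoving (hU : ContDiff 𝕜 1 U)
    (hP : Differentiable 𝕜 P) (hΓ : ContDiff 𝕜 1 (Function.uncurry Γ))
    (hflow : ∀ s t, HasDerivAt (fun s => Γ s t) (U (Γ s t)) s) (s t : 𝕜) :
    HasDerivAt (fun s => P (Γ s t) (deriv (Γ s) t))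
      (lieDerivOneForm U P (Γ s t) (deriv (Γ s) t)) s :=
  ((hP _).hasFDerivAt.comp_hasDerivAt s (hflow s t)).clm_apply
    (hasDerivAt_deriv_of_comoving hU hΓ hflow s t)

end OneForm

theorem circulation_derivative_general {E F : Type*} [NormedAddCommGroup E] [NormedSpace ℝ E]
    [NormedAddCommGroup F] [NormedSpace ℝ F] [CompleteSpace F]
    {U : E → E} (hU : ContDiff ℝ 1 U) {P : E → E →L[ℝ] F} (hP : ContDiff ℝ 1 P)
    {Γ : ℝ → ℝ → E} (hΓ : ContDiff ℝ 1 (Function.uncurry Γ))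
    (hflow : ∀ s t, HasDerivAt (fun s => Γ s t) (U (Γ s t)) s) (a b s : ℝ) :
    HasDerivAt (fun s => ∫ t in a..b, P (Γ s t) (deriv (Γ s) t))
      (∫ t in a..b, lieDerivOneForm U P (Γ s t) (deriv (Γ s) t)) s := by
  have hderiv := continuous_deriv_of_contDiff_uncurry hΓ
  refine hasDerivAt_intervalIntegral_of_continuous_deriv (fun s => ?_) ?_
    (hasDerivAt_oneForm_apply_deriv_of_comoving hU (hP.differentiable one_ne_zero) hΓ hflow) a b s
  · exact ((hP.continuous.comp hΓ.continuous).clm_apply hderiv).comp (Continuous.prodMk_right s)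
  · exact ((continuous_lieDerivOneForm hU hP).comp hΓ.continuous).clm_apply hderiv

/-- The linear form `v ↦ ∑ i, p i * v i` with components `p`, itself depending linearly on `p`;
it turns the component fields of `circulation` and `lieDeriv1` into 1-forms. -/
def covector {ι : Type*} [Fintype ι] : (ι → ℝ) →L[ℝ] (ι → ℝ) →L[ℝ] ℝ :=
  ∑ i, (ContinuousLinearMap.proj i).smulRight (ContinuousLinearMap.proj i)

theorem covector_apply {ι : Type*} [Fintype ι] (p v : ι → ℝ) : covector p v = ∑ i, p i * v i := by
  simp [covector]

theorem fderiv_eq_sum_pd4 (f : V4 → ℝ) (x v : V4) : fderiv ℝ f x v = ∑ μ, v μ * pd4 μ f x := by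
  conv_lhs => rw [pi_eq_sum_univ' v]
  simp only [pd4, map_sum, map_smul, smul_eq_mul]

theorem fderiv_apply_eq_sum_pd4 {f : V4 → V4} {x : V4} (hf : DifferentiableAt ℝ f x) (v : V4)
    (ν : Fin 4) : fderiv ℝ f x v ν = ∑ μ, v μ * pd4 μ (fun y => f y ν) x := by
  rw [← fderiv_eq_sum_pd4, fderiv_apply hf, ContinuousLinearMap.comp_apply,
    ContinuousLinearMap.proj_apply]

theorem circulation_eq_intervalIntegral {γ : ℝ → V4} (hγ : Differentiable ℝ γ) (P : V4 → V4) :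
    circulation P γ = ∫ τ in (0 : ℝ)..1, covector (P (γ τ)) (deriv γ τ) := by
  have hcomp : ∀ τ μ, deriv (fun t => γ t μ) τ = deriv γ τ μ :=
    fun τ μ => (hasDerivAt_pi.1 (hγ τ).hasDerivAt μ).deriv
  simp only [circulation, covector_apply, hcomp]

theorem covector_lieDeriv1 {U P : V4 → V4} {x : V4} (hU : DifferentiableAt ℝ U x)
    (hP : DifferentiableAt ℝ P x) :
    covector (lieDeriv1 U P x) = lieDerivOneForm U (covector ∘ P) x := by
  ext1 v
  have hfderiv : fderiv ℝ (covector ∘ P) x (U x) = covector (fderiv ℝ P x (U x)) :=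
    DFunLike.congr_fun (covector.hasFDerivAt.comp x hP.hasFDerivAt).fderiv (U x)
  simp only [lieDerivOneForm, lieDeriv1, add_apply, ContinuousLinearMap.comp_apply, hfderiv,
    Function.comp_apply, covector_apply, fderiv_apply_eq_sum_pd4 hP, fderiv_apply_eq_sum_pd4 hU,
    Finset.sum_add_distrib, add_mul, Finset.sum_mul, Finset.mul_sum]
  congr 1
  rw [Finset.sum_comm]
  exact Finset.sum_congr rfl fun μ _ => Finset.sum_congr rfl fun ν _ => by ring

/-- The derivative of the circulation along a co-moving loop equals the circulation of
    the Lie derivative L_U P. -/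
theorem circulation_derivative
    (U : V4 → V4) (hU : ContDiff ℝ 1 U)
    (φ : ℝ → V4 → V4) (hφ : ContDiff ℝ 1 (fun q : ℝ × V4 => φ q.1 q.2))
    (hφ0 : φ 0 = id)
    (hflow : ∀ s x, HasDerivAt (fun s => φ s x) (U (φ s x)) s)
    (P : V4 → V4) (hP : ContDiff ℝ 1 P)
    (γ0 : ℝ → V4) (hγ0 : ContDiff ℝ 1 γ0) (hloop : γ0 0 = γ0 1) :
    ∀ s : ℝ,
      HasDerivAt (fun s => circulation P (fun τ => φ s (γ0 τ)))
        (circulation (lieDeriv1 U P) (fun τ => φ s (γ0 τ))) s := by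
  have hΓ : ContDiff ℝ 1 (Function.uncurry fun s τ => φ s (γ0 τ)) :=
    hφ.comp (contDiff_fst.prodMk (hγ0.comp contDiff_snd))
  simpa only [circulation_eq_intervalIntegral (differentiable_of_contDiff_uncurry hΓ _),
    covector_lieDeriv1 (hU.differentiable one_ne_zero _) (hP.differentiable one_ne_zero _),
    Function.comp_apply] using
    circulation_derivative_general hU (covector.contDiff.comp hP) hΓ (fun s τ => hflow s (γ0 τ)) 0 1
end
end

section
/- (Circulation law / relativistic Kelvin theorem.) Let c > 0, let U : ℝ⁴ → ℝ⁴ be a C¹ vector field generating a global flow φ_s (jointly C¹ in (s, x), φ₀ = id, ∂_s φ_s(x) = U(φ_s(x))), let P : ℝ⁴ → ℝ⁴ be a C¹ covector field, and let f : ℝ⁴ → ℝ be C¹ with (L_U P)_ν = c⁻¹ ∂_ν f at every point and every ν (i.e., L_U P = c⁻¹ df). Then for every C¹ loop γ₀ : [0,1] → ℝ⁴ (γ₀(0) = γ₀(1)), the circulation Φ(s) = ∮_{φ_s ∘ γ₀} P is independent of s. -/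
open MeasureTheory

noncomputable section

/-!
For a family of curves `γ s` carried along by `U`, the symmetry of mixed partial derivatives gives
`∂ₛ ∂_τ γ = DU(γ) ∂_τ γ`. Hence `∂ₛ (ω(γ) ∂_τ γ) = (L_U ω)(γ) ∂_τ γ`: the rate of change of the
circulation of `ω` is the circulation of `L_U ω`, which vanishes around a loop when `L_U ω` is
exact.
-/

open Function Set

section ParametricDerivatives

theorem hasDerivAt_intervalIntegral_of_continuous_deriv_s9 {𝕜 E : Type*} [RCLike 𝕜]
    [NormedAddCommGroup E] [NormedSpace ℝ E] [NormedSpace 𝕜 E]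
    {μ : Measure ℝ} [IsLocallyFiniteMeasure μ] {F F' : 𝕜 → ℝ → E}
    (hF : ∀ x, Continuous (F x)) (hF' : Continuous (uncurry F'))
    (hderiv : ∀ x t, HasDerivAt (fun y => F y t) (F' x t) x) (a b : ℝ) (x₀ : 𝕜) :
    HasDerivAt (fun x => ∫ t in a..b, F x t ∂μ) (∫ t in a..b, F' x₀ t ∂μ) x₀ := by
  obtain ⟨C, hC⟩ := ((isCompact_closedBall x₀ 1).prod
    (isCompact_uIcc (a := a) (b := b))).exists_bound_of_continuousOn hF'.continuousOn
  exact (intervalIntegral.hasDerivAt_integral_of_dominated_loc_of_deriv_le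
    (bound := fun _ => C) (Metric.closedBall_mem_nhds x₀ one_pos)
    (.of_forall fun x => (hF x).aestronglyMeasurable)
    ((hF x₀).intervalIntegrable a b)
    (hF'.uncurry_left x₀).aestronglyMeasurable
    (.of_forall fun t ht x hx => hC (x, t) ⟨hx, uIoc_subset_uIcc ht⟩)
    intervalIntegrable_const
    (.of_forall fun t _ x _ => hderiv x t)).2

variable {E : Type*} [NormedAddCommGroup E] [NormedSpace ℝ E]

/- Differentiating `G s τ = G 0 τ + ∫₀ˢ ∂ₛG` under the integral sign in `τ` writes `∂_τ G` as an
integral in `s`, so no second-order differentiability of `G` is needed. -/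
theorem hasDerivAt_partialDeriv_of_hasDerivAt_swap [CompleteSpace E] {G G₁ G₂ G₁₂ : ℝ → ℝ → E}
    (h₁ : ∀ s τ, HasDerivAt (fun s => G s τ) (G₁ s τ) s)
    (h₂ : ∀ s τ, HasDerivAt (G s) (G₂ s τ) τ)
    (h₁₂ : ∀ s τ, HasDerivAt (G₁ s) (G₁₂ s τ) τ)
    (hG₁ : ∀ τ, Continuous fun s => G₁ s τ) (hG₁₂ : Continuous (uncurry G₁₂)) (s τ : ℝ) :
    HasDerivAt (fun s => G₂ s τ) (G₁₂ s τ) s := by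
  have integral_G₁ (s τ : ℝ) : ∫ r in 0..s, G₁ r τ = G s τ - G 0 τ :=
    intervalIntegral.integral_eq_sub_of_hasDerivAt (fun r _ => h₁ r τ)
      ((hG₁ τ).intervalIntegrable 0 s)
  have integral_G₁₂ (s : ℝ) : ∫ r in 0..s, G₁₂ r τ = G₂ s τ - G₂ 0 τ := by
    have h := hasDerivAt_intervalIntegral_of_continuous_deriv_s9 (μ := volume)
      (F' := fun τ r => G₁₂ r τ) hG₁ (hG₁₂.comp continuous_swap) (fun τ r => h₁₂ r τ) 0 s τ
    simp only [integral_G₁] at h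
    exact h.unique ((h₂ s τ).sub (h₂ 0 τ))
  have hG₂ : (fun s => G₂ s τ) = fun s => G₂ 0 τ + ∫ r in 0..s, G₁₂ r τ := by
    funext s
    rw [integral_G₁₂, add_sub_cancel]
  rw [hG₂]
  exact ((hG₁₂.uncurry_right τ).integral_hasStrictDerivAt 0 s).hasDerivAt.const_add _

theorem continuous_uncurry_deriv {X : Type*} [NormedAddCommGroup X] [NormedSpace ℝ X]
    {γ : X → ℝ → E} (hγ : ContDiff ℝ 1 (uncurry γ)) :
    Continuous fun p : X × ℝ => deriv (γ p.1) p.2 := by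
  have h : ContDiff ℝ 0 fun p : X × ℝ => fderiv ℝ (γ p.1) p.2 :=
    ContDiff.fderiv (f := fun p : X × ℝ => γ p.1) (m := 1)
      (hγ.comp (by fun_prop : ContDiff ℝ 1 fun q : (X × ℝ) × ℝ => (q.1.1, q.2)))
      contDiff_snd (by norm_num)
  exact h.continuous.clm_apply continuous_const

end ParametricDerivatives

section Transport

variable {E F : Type*} [NormedAddCommGroup E] [NormedSpace ℝ E]
  [NormedAddCommGroup F] [NormedSpace ℝ F]

/-- The Lie derivative `L_U ω` of a 1-form along a vector field, with 1-forms encoded as maps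
`E → E →L[ℝ] F` and the derivatives taken in the flat space `E`. -/
def lieDerivForm (U : E → E) (ω : E → E →L[ℝ] F) (x : E) : E →L[ℝ] F :=
  fderiv ℝ ω x (U x) + (ω x).comp (fderiv ℝ U x)

variable {U : E → E} {ω : E → E →L[ℝ] F}

theorem continuous_lieDerivForm (hU : ContDiff ℝ 1 U) (hω : ContDiff ℝ 1 ω) :
    Continuous (lieDerivForm U ω) :=
  ((hω.continuous_fderiv one_ne_zero).clm_apply hU.continuous).add
    (hω.continuous.clm_comp (hU.continuous_fderiv one_ne_zero))

theorem integral_apply_deriv_eq_sub [CompleteSpace F] {α : E → E →L[ℝ] F} {g : E → F}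
    (hα : Continuous α) (hg : ∀ x, HasFDerivAt g (α x) x) {γ : ℝ → E} (hγ : ContDiff ℝ 1 γ)
    (a b : ℝ) : ∫ τ in a..b, α (γ τ) (deriv γ τ) = g (γ b) - g (γ a) :=
  intervalIntegral.integral_eq_sub_of_hasDerivAt
    (fun τ _ => (hg (γ τ)).comp_hasDerivAt τ (hγ.differentiable one_ne_zero τ).hasDerivAt)
    (((hα.comp hγ.continuous).clm_apply hγ.continuous_deriv_one).intervalIntegrable a b)

variable {γ : ℝ → ℝ → E}

theorem hasDerivAt_deriv_of_transported [CompleteSpace E] (hU : ContDiff ℝ 1 U)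
    (hγ : ContDiff ℝ 1 (uncurry γ))
    (hγU : ∀ s τ, HasDerivAt (fun s => γ s τ) (U (γ s τ)) s) (s τ : ℝ) :
    HasDerivAt (fun s => deriv (γ s) τ) (fderiv ℝ U (γ s τ) (deriv (γ s) τ)) s := by
  have hγτ (s τ : ℝ) : HasDerivAt (γ s) (deriv (γ s) τ) τ :=
    ((hγ.comp (contDiff_prodMk_right s)).differentiable one_ne_zero τ).hasDerivAt
  refine hasDerivAt_partialDeriv_of_hasDerivAt_swap
    (G₁₂ := fun s τ => fderiv ℝ U (γ s τ) (deriv (γ s) τ)) hγU hγτ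
    (fun s τ => (hU.differentiable one_ne_zero _).hasFDerivAt.comp_hasDerivAt τ (hγτ s τ))
    (fun τ => hU.continuous.comp (hγ.continuous.uncurry_right τ)) ?_ s τ
  exact ((hU.continuous_fderiv one_ne_zero).comp hγ.continuous).clm_apply
    (continuous_uncurry_deriv hγ)

theorem hasDerivAt_integral_apply_deriv_of_transported [CompleteSpace E] (hU : ContDiff ℝ 1 U)
    (hω : ContDiff ℝ 1 ω) (hγ : ContDiff ℝ 1 (uncurry γ))
    (hγU : ∀ s τ, HasDerivAt (fun s => γ s τ) (U (γ s τ)) s) (a b s : ℝ) :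
    HasDerivAt (fun s => ∫ τ in a..b, ω (γ s τ) (deriv (γ s) τ))
      (∫ τ in a..b, lieDerivForm U ω (γ s τ) (deriv (γ s) τ)) s := by
  have hγ' : Continuous fun p : ℝ × ℝ => deriv (γ p.1) p.2 := continuous_uncurry_deriv hγ
  have deriv_integrand (s τ : ℝ) : HasDerivAt (fun s => ω (γ s τ) (deriv (γ s) τ))
      (lieDerivForm U ω (γ s τ) (deriv (γ s) τ)) s :=
    ((hω.differentiable one_ne_zero _).hasFDerivAt.comp_hasDerivAt s (hγU s τ)).clm_apply
      (hasDerivAt_deriv_of_transported hU hγ hγU s τ)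
  have continuous_pairing {α : E → E →L[ℝ] F} (hα : Continuous α) :
      Continuous (uncurry fun s τ => α (γ s τ) (deriv (γ s) τ)) :=
    (hα.comp hγ.continuous).clm_apply hγ'
  exact hasDerivAt_intervalIntegral_of_continuous_deriv_s9
    (fun s => (continuous_pairing hω.continuous).uncurry_left s)
    (continuous_pairing (continuous_lieDerivForm hU hω)) deriv_integrand a b s

theorem relativistic_circulation_law_general [CompleteSpace E] [CompleteSpace F]
    (hU : ContDiff ℝ 1 U) (hω : ContDiff ℝ 1 ω)
    {g : E → F} (hg : ∀ x, HasFDerivAt g (lieDerivForm U ω x) x)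
    (hγ : ContDiff ℝ 1 (uncurry γ))
    (hγU : ∀ s τ, HasDerivAt (fun s => γ s τ) (U (γ s τ)) s)
    {a b : ℝ} (hloop : ∀ s, γ s a = γ s b) (s₁ s₂ : ℝ) :
    ∫ τ in a..b, ω (γ s₁ τ) (deriv (γ s₁) τ) = ∫ τ in a..b, ω (γ s₂ τ) (deriv (γ s₂) τ) := by
  have circulation_lieDeriv (s : ℝ) :
      ∫ τ in a..b, lieDerivForm U ω (γ s τ) (deriv (γ s) τ) = 0 := by
    have hγs : ContDiff ℝ 1 (γ s) := hγ.comp (contDiff_prodMk_right s)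
    rw [integral_apply_deriv_eq_sub (continuous_lieDerivForm hU hω) hg hγs, hloop, sub_self]
  have deriv_circulation (s : ℝ) :
      HasDerivAt (fun s => ∫ τ in a..b, ω (γ s τ) (deriv (γ s) τ)) 0 s :=
    circulation_lieDeriv s ▸ hasDerivAt_integral_apply_deriv_of_transported hU hω hγ hγU a b s
  exact is_const_of_deriv_eq_zero (fun s => (deriv_circulation s).differentiableAt)
    (fun s => (deriv_circulation s).deriv) s₁ s₂

end Transport

section Coordinates

variable {ι : Type*} [Fintype ι]

/-- The constant-coefficient 1-form `∑ μ, p μ dx^μ`, as a continuous linear function of its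
components `p`; it turns a covector field into the coordinate-free encoding of 1-forms. -/
def formOfComponents : (ι → ℝ) →L[ℝ] (ι → ℝ) →L[ℝ] ℝ :=
  (dotProductBilin ℝ ℝ).toContinuousBilinearMap

theorem formOfComponents_apply (p v : ι → ℝ) : formOfComponents p v = ∑ μ, p μ * v μ :=
  rfl

theorem formOfComponents_single [DecidableEq ι] (p : ι → ℝ) (ν : ι) :
    formOfComponents p (Pi.single ν 1) = p ν :=
  dotProduct_single_one p ν

theorem formOfComponents_components [DecidableEq ι] (α : (ι → ℝ) →L[ℝ] ℝ) :
    formOfComponents (fun ν => α (Pi.single ν 1)) = α := by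
  ext v
  conv_rhs => rw [pi_eq_sum_univ' v]
  simp only [formOfComponents_apply, map_sum, map_smul, smul_eq_mul, mul_comm]

theorem pd4_component {P : V4 → V4} {x : V4} (hP : DifferentiableAt ℝ P x) (μ ν : Fin 4) :
    pd4 μ (fun y => P y ν) x = fderiv ℝ P x (Pi.single μ 1) ν := by
  rw [pd4, fderiv_apply hP]
  rfl

theorem lieDerivForm_formOfComponents {U P : V4 → V4} {x : V4} (hU : DifferentiableAt ℝ U x)
    (hP : DifferentiableAt ℝ P x) :
    lieDerivForm U (fun y => formOfComponents (P y)) x = formOfComponents (lieDeriv1 U P x) := by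
  have hform : fderiv ℝ (fun y => formOfComponents (P y)) x =
      formOfComponents.comp (fderiv ℝ P x) :=
    (formOfComponents.hasFDerivAt.comp x hP.hasFDerivAt).fderiv
  rw [← formOfComponents_components (lieDerivForm U _ x)]
  congr 1
  funext ν
  have hdir : fderiv ℝ P x (U x) ν = ∑ μ, U x μ * fderiv ℝ P x (Pi.single μ 1) ν := by
    conv_lhs => rw [pi_eq_sum_univ' (U x)]
    simp only [map_sum, map_smul, Finset.sum_apply, Pi.smul_apply, smul_eq_mul]
  calc lieDerivForm U (fun y => formOfComponents (P y)) x (Pi.single ν 1)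
      = fderiv ℝ P x (U x) ν + ∑ μ, P x μ * fderiv ℝ U x (Pi.single ν 1) μ := by
        rw [lieDerivForm, hform, add_apply]
        exact congrArg (· + _) (formOfComponents_single _ ν)
    _ = lieDeriv1 U P x ν := by
        simp only [hdir, lieDeriv1, pd4_component hP, pd4_component hU, Finset.sum_add_distrib]

theorem circulation_eq_integral_form (P : V4 → V4) {γ : ℝ → V4} (hγ : Differentiable ℝ γ) :
    circulation P γ = ∫ τ in (0:ℝ)..1, formOfComponents (P (γ τ)) (deriv γ τ) := by
  simp only [circulation, formOfComponents_apply,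
    deriv_pi fun μ => differentiableAt_pi.1 (hγ _) μ]

theorem hasFDerivAt_lieDerivForm_of_components {U P : V4 → V4} (hU : Differentiable ℝ U)
    (hP : Differentiable ℝ P) {f : V4 → ℝ} (hf : Differentiable ℝ f) {k : ℝ}
    (h : ∀ x ν, lieDeriv1 U P x ν = k * pd4 ν f x) (x : V4) :
    HasFDerivAt (k • f) (lieDerivForm U (fun y => formOfComponents (P y)) x) x := by
  have hcomponents : lieDeriv1 U P x = k • fun ν => fderiv ℝ f x (Pi.single ν 1) :=
    funext (h x)
  rw [lieDerivForm_formOfComponents (hU x) (hP x), hcomponents, map_smul,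
    formOfComponents_components]
  exact (hf x).hasFDerivAt.const_smul k

end Coordinates

/-- Relativistic Kelvin circulation theorem: if L_U P = c⁻¹ df, then the circulation
    of P along any co-moving loop is independent of the flow parameter s. -/
theorem relativistic_circulation_law (c : ℝ) (hc : 0 < c)
    (U : V4 → V4) (hU : ContDiff ℝ 1 U)
    (φ : ℝ → V4 → V4) (hφ : ContDiff ℝ 1 (fun q : ℝ × V4 => φ q.1 q.2))
    (hφ0 : φ 0 = id)
    (hflow : ∀ s x, HasDerivAt (fun s => φ s x) (U (φ s x)) s)
    (P : V4 → V4) (hP : ContDiff ℝ 1 P)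
    (f : V4 → ℝ) (hf : ContDiff ℝ 1 f)
    (heqm : ∀ x ν, lieDeriv1 U P x ν = c⁻¹ * pd4 ν f x) :
    ∀ γ0 : ℝ → V4, ContDiff ℝ 1 γ0 → γ0 0 = γ0 1 →
      ∀ s₁ s₂ : ℝ,
        circulation P (fun τ => φ s₁ (γ0 τ)) = circulation P (fun τ => φ s₂ (γ0 τ)) := by
  intro γ0 hγ0 hloop s₁ s₂
  have htransported : ContDiff ℝ 1 (uncurry fun s τ => φ s (γ0 τ)) :=
    hφ.comp (contDiff_fst.prodMk (hγ0.comp contDiff_snd))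
  have hcurve (s : ℝ) : Differentiable ℝ fun τ => φ s (γ0 τ) :=
    (htransported.comp (contDiff_prodMk_right s)).differentiable one_ne_zero
  have hform : ContDiff ℝ 1 fun x => formOfComponents (P x) := hP.continuousLinearMap_comp _
  rw [circulation_eq_integral_form P (hcurve s₁), circulation_eq_integral_form P (hcurve s₂)]
  exact relativistic_circulation_law_general hU hform
    (hasFDerivAt_lieDerivForm_of_components (hU.differentiable one_ne_zero)
      (hP.differentiable one_ne_zero) (hf.differentiable one_ne_zero) heqm)
    htransported (fun s τ => hflow s (γ0 τ)) (fun s => congrArg (φ s) hloop) s₁ s₂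
end
end

section
/- (Relativistic vorticity equation.) Let c > 0, let P : ℝ⁴ → ℝ⁴ be a C² covector field, θ : ℝ⁴ → ℝ be C², and U : ℝ⁴ → ℝ⁴ be C¹. Set M_{μν} = ∂_μ P_ν − ∂_ν P_μ. If the equation of motion Σ_μ U^μ M_{μν} = −c⁻¹ ∂_ν θ holds at every point for every ν, then the Lie derivative of the vorticity 2-form vanishes: Σ_α (U^α ∂_α M_{μν} + M_{αν} ∂_μ U^α + M_{μα} ∂_ν U^α) = 0 at every point for all μ, ν. -/
open MeasureTheory

noncomputable section

/-!
Cartan's formula `L_U M = d(i_U M) + i_U(dM)` reduces the theorem to `d² = 0`,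
used twice: `M = dP` is closed, and the equation of motion says that `i_U M` is exact.
-/

open scoped Topology

theorem differentiableAt_fderiv {𝕜 E F : Type*} [NontriviallyNormedField 𝕜]
    [NormedAddCommGroup E] [NormedSpace 𝕜 E] [NormedAddCommGroup F] [NormedSpace 𝕜 F]
    {f : E → F} {x : E} (hf : ContDiffAt 𝕜 2 f x) : DifferentiableAt 𝕜 (fderiv 𝕜 f) x :=
  (hf.fderiv_right one_add_one_eq_two.le).differentiableAt one_ne_zero

section CoordinateForms

variable {𝕜 ι : Type*} [NontriviallyNormedField 𝕜] [DecidableEq ι]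

/-- Partial derivative of a scalar function on `𝕜^ι` in the `i`-th coordinate direction;
`pd4` is the case of `ℝ⁴`. -/
def partialDeriv (i : ι) (f : (ι → 𝕜) → 𝕜) (x : ι → 𝕜) : 𝕜 :=
  fderiv 𝕜 f x (Pi.single i 1)

/-- Exterior derivative of a covector field, as the family of components
`(dP)_{ij} = ∂_i P_j - ∂_j P_i`. For a momentum field it is the vorticity 2-form. -/
def extDerivOneForm (P : (ι → 𝕜) → ι → 𝕜) (i j : ι) (x : ι → 𝕜) : 𝕜 :=
  partialDeriv i (fun y => P y j) x - partialDeriv j (fun y => P y i) x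

/-- Exterior derivative of a 2-form given by its components, as the cyclic sum
`(dM)_{kij} = ∂_k M_{ij} + ∂_i M_{jk} + ∂_j M_{ki}`. This is the exterior derivative only for
antisymmetric `M`. -/
def extDerivTwoForm (M : ι → ι → (ι → 𝕜) → 𝕜) (k i j : ι) (x : ι → 𝕜) : 𝕜 :=
  partialDeriv k (M i j) x + partialDeriv i (M j k) x + partialDeriv j (M k i) x

variable {f g : (ι → 𝕜) → 𝕜} {P U : (ι → 𝕜) → ι → 𝕜} {M : ι → ι → (ι → 𝕜) → 𝕜} {x : ι → 𝕜}

theorem extDerivOneForm_antisymm (P : (ι → 𝕜) → ι → 𝕜) (i j : ι) :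
    extDerivOneForm P i j = -extDerivOneForm P j i :=
  funext fun _ => (neg_sub _ _).symm

theorem extDerivOneForm_congr {Q : (ι → 𝕜) → ι → 𝕜} (h : P =ᶠ[𝓝 x] Q) (i j : ι) :
    extDerivOneForm P i j x = extDerivOneForm Q i j x := by
  have hcomp (k : ι) : (fun y => P y k) =ᶠ[𝓝 x] fun y => Q y k :=
    h.fun_comp fun p => p k
  simp only [extDerivOneForm, partialDeriv, (hcomp _).fderiv_eq]

section Finite

variable [Finite ι]

theorem partialDeriv_const_smul (c : 𝕜) (i : ι) (f : (ι → 𝕜) → 𝕜) (x : ι → 𝕜) :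
    partialDeriv i (c • f) x = c * partialDeriv i f x := by
  cases nonempty_fintype ι
  simp [partialDeriv, fderiv_const_smul_field]

theorem partialDeriv_neg (i : ι) (f : (ι → 𝕜) → 𝕜) (x : ι → 𝕜) :
    partialDeriv i (-f) x = -partialDeriv i f x := by
  cases nonempty_fintype ι
  simp [partialDeriv, fderiv_neg]

theorem partialDeriv_sub (hf : DifferentiableAt 𝕜 f x) (hg : DifferentiableAt 𝕜 g x) (i : ι) :
    partialDeriv i (fun y => f y - g y) x = partialDeriv i f x - partialDeriv i g x := by
  cases nonempty_fintype ι
  simp [partialDeriv, fderiv_fun_sub hf hg]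

theorem partialDeriv_sum_mul {κ : Type*} {s : Finset κ} {F G : κ → (ι → 𝕜) → 𝕜}
    (hF : ∀ k ∈ s, DifferentiableAt 𝕜 (F k) x) (hG : ∀ k ∈ s, DifferentiableAt 𝕜 (G k) x)
    (i : ι) :
    partialDeriv i (fun y => ∑ k ∈ s, F k y * G k y) x =
      ∑ k ∈ s, (F k x * partialDeriv i (G k) x + G k x * partialDeriv i (F k) x) := by
  cases nonempty_fintype ι
  rw [partialDeriv, fderiv_fun_sum fun k hk => (hF k hk).fun_mul (hG k hk), sum_apply]
  exact Finset.sum_congr rfl fun k hk => by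
    simp [partialDeriv, fderiv_fun_mul (hF k hk) (hG k hk)]

end Finite

variable [Fintype ι]

/-- Interior product of a vector field with a 2-form, contracting the first index:
`(i_U M)_j = U^i M_{ij}`. -/
def interiorTwoForm (U : (ι → 𝕜) → ι → 𝕜) (M : ι → ι → (ι → 𝕜) → 𝕜) (x : ι → 𝕜) (j : ι) : 𝕜 :=
  ∑ i, U x i * M i j x

/-- Lie derivative of a 2-form `M` along a vector field, in components. The formula is that for
any covariant 2-tensor, antisymmetric or not. -/
def lieDerivTwoForm (U : (ι → 𝕜) → ι → 𝕜) (M : ι → ι → (ι → 𝕜) → 𝕜) (i j : ι) (x : ι → 𝕜) : 𝕜 :=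
  ∑ k, (U x k * partialDeriv k (M i j) x
    + M k j x * partialDeriv i (fun y => U y k) x
    + M i k x * partialDeriv j (fun y => U y k) x)

theorem differentiableAt_partialDeriv (hf : ContDiffAt 𝕜 2 f x) (i : ι) :
    DifferentiableAt 𝕜 (partialDeriv i f) x :=
  (differentiableAt_fderiv hf).clm_apply (differentiableAt_const _)

theorem partialDeriv_partialDeriv (hf : ContDiffAt 𝕜 2 f x) (i j : ι) :
    partialDeriv i (partialDeriv j f) x =
      fderiv 𝕜 (fderiv 𝕜 f) x (Pi.single i 1) (Pi.single j 1) := by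
  change fderiv 𝕜 (fun y => fderiv 𝕜 f y (Pi.single j 1)) x (Pi.single i 1) = _
  simp [fderiv_clm_apply (differentiableAt_fderiv hf) (differentiableAt_const _)]

theorem partialDeriv_comm (hf : ContDiffAt 𝕜 (minSmoothness 𝕜 2) f x) (i j : ι) :
    partialDeriv i (partialDeriv j f) x = partialDeriv j (partialDeriv i f) x := by
  have hf₂ : ContDiffAt 𝕜 2 f x := hf.of_le le_minSmoothness
  rw [partialDeriv_partialDeriv hf₂, partialDeriv_partialDeriv hf₂]
  exact (hf.isSymmSndFDerivAt le_rfl).eq _ _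

theorem extDerivOneForm_partialDeriv (hf : ContDiffAt 𝕜 (minSmoothness 𝕜 2) f x) (i j : ι) :
    extDerivOneForm (fun y k => partialDeriv k f y) i j x = 0 :=
  sub_eq_zero.2 (partialDeriv_comm hf i j)

theorem differentiableAt_extDerivOneForm (hP : ContDiffAt 𝕜 2 P x) (i j : ι) :
    DifferentiableAt 𝕜 (extDerivOneForm P i j) x :=
  (differentiableAt_partialDeriv (contDiffAt_pi.1 hP j) i).fun_sub
    (differentiableAt_partialDeriv (contDiffAt_pi.1 hP i) j)

theorem extDerivTwoForm_extDerivOneForm (hP : ContDiffAt 𝕜 (minSmoothness 𝕜 2) P x)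
    (k i j : ι) : extDerivTwoForm (extDerivOneForm P) k i j x = 0 := by
  have hcomp (a : ι) : ContDiffAt 𝕜 (minSmoothness 𝕜 2) (fun y => P y a) x :=
    contDiffAt_pi.1 hP a
  have hdiff (a b : ι) : DifferentiableAt 𝕜 (partialDeriv a fun y => P y b) x :=
    differentiableAt_partialDeriv ((hcomp b).of_le le_minSmoothness) a
  have hexpand (a b c : ι) : partialDeriv a (extDerivOneForm P b c) x =
      partialDeriv a (partialDeriv b fun y => P y c) x
        - partialDeriv a (partialDeriv c fun y => P y b) x :=
    partialDeriv_sub (hdiff b c) (hdiff c b) a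
  rw [extDerivTwoForm, hexpand, hexpand, hexpand, partialDeriv_comm (hcomp j) k i,
    partialDeriv_comm (hcomp i) k j, partialDeriv_comm (hcomp k) i j]
  ring

theorem lieDerivTwoForm_eq_extDerivOneForm_add_sum (hU : DifferentiableAt 𝕜 U x)
    (hM : ∀ i j, DifferentiableAt 𝕜 (M i j) x) (hanti : ∀ i j, M i j = -M j i) (i j : ι) :
    lieDerivTwoForm U M i j x =
      extDerivOneForm (interiorTwoForm U M) i j x + ∑ k, U x k * extDerivTwoForm M k i j x := by
  have hleibniz (a b : ι) : partialDeriv a (fun y => interiorTwoForm U M y b) x =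
      ∑ k, (U x k * partialDeriv a (M k b) x + M k b x * partialDeriv a (fun y => U y k) x) :=
    partialDeriv_sum_mul (fun k _ => differentiableAt_pi.1 hU k) (fun k _ => hM k b) a
  rw [extDerivOneForm, hleibniz, hleibniz, ← Finset.sum_sub_distrib, ← Finset.sum_add_distrib]
  refine Finset.sum_congr rfl fun k _ => ?_
  rw [extDerivTwoForm, hanti i k, hanti j k, partialDeriv_neg, Pi.neg_apply]
  ring

theorem vorticity_lie_derivative_vanishes_general (hP : ContDiffAt 𝕜 (minSmoothness 𝕜 2) P x)
    (hU : DifferentiableAt 𝕜 U x) {φ : (ι → 𝕜) → 𝕜}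
    (hφ : ContDiffAt 𝕜 (minSmoothness 𝕜 2) φ x)
    (heqm : interiorTwoForm U (extDerivOneForm P) =ᶠ[𝓝 x] fun y k => partialDeriv k φ y)
    (i j : ι) : lieDerivTwoForm U (extDerivOneForm P) i j x = 0 := by
  have hdiff := differentiableAt_extDerivOneForm (hP.of_le le_minSmoothness)
  rw [lieDerivTwoForm_eq_extDerivOneForm_add_sum hU hdiff (extDerivOneForm_antisymm P)]
  simp only [extDerivOneForm_congr heqm, extDerivOneForm_partialDeriv hφ,
    extDerivTwoForm_extDerivOneForm hP, mul_zero, Finset.sum_const_zero, add_zero]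

end CoordinateForms

/-- Relativistic vorticity equation: if U^μ M_{μν} = −c⁻¹∂_νθ with M_{μν} = ∂_μP_ν − ∂_νP_μ,
    then the Lie derivative of the vorticity 2-form vanishes. -/
theorem vorticity_lie_derivative_vanishes (c : ℝ) (hc : 0 < c)
    (P : V4 → V4) (hP : ContDiff ℝ 2 P)
    (θ : V4 → ℝ) (hθ : ContDiff ℝ 2 θ)
    (U : V4 → V4) (hU : ContDiff ℝ 1 U)
    (M : Fin 4 → Fin 4 → V4 → ℝ)
    (hM : ∀ μ ν x, M μ ν x = pd4 μ (fun y => P y ν) x - pd4 ν (fun y => P y μ) x)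
    (heqm : ∀ x ν, (∑ μ, U x μ * M μ ν x) = -c⁻¹ * pd4 ν θ x) :
    ∀ x, ∀ μ ν : Fin 4,
      (∑ α, (U x α * pd4 α (M μ ν) x
        + M α ν x * pd4 μ (fun y => U y α) x
        + M μ α x * pd4 ν (fun y => U y α) x)) = 0 := by
  obtain rfl : M = extDerivOneForm P := funext₃ hM
  intro x μ ν
  have hpot : interiorTwoForm U (extDerivOneForm P) = fun y ν => partialDeriv ν (-c⁻¹ • θ) y :=
    funext₂ fun y ν => (heqm y ν).trans (partialDeriv_const_smul _ ν θ y).symm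
  have hsmooth : minSmoothness ℝ 2 ≤ 2 := minSmoothness_of_isRCLikeNormedField.le
  exact vorticity_lie_derivative_vanishes_general (hP.contDiffAt.of_le hsmooth)
    (hU.differentiable one_ne_zero x) ((hθ.const_smul (-c⁻¹)).contDiffAt.of_le hsmooth)
    hpot.eventuallyEq μ ν
end
end

section
/- (Vortex motion / frozen-in support.) Let c > 0, let U : ℝ⁴ → ℝ⁴ be a C¹ vector field generating a global flow φ_s (jointly C¹ in (s, x), each φ_s a diffeomorphism of ℝ⁴, φ₀ = id, ∂_s φ_s(x) = U(φ_s(x))), let P : ℝ⁴ → ℝ⁴ be C² and θ : ℝ⁴ → ℝ be C², and suppose the equation of motion Σ_μ U^μ M_{μν} = −c⁻¹ ∂_ν θ holds everywhere, where M_{μν} = ∂_μ P_ν − ∂_ν P_μ. Let Ξ₀ = {x ∈ ℝ⁴ : x⁰ = 0}, let supp M denote the closure of {x : M(x) ≠ 0}, and let S₀ = supp M ∩ Ξ₀. Then for every s ∈ ℝ, supp M ∩ φ_s(Ξ₀) = φ_s(S₀). -/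
open MeasureTheory

noncomputable section

/-!
The flow preserves the vorticity two-form `M = dP`: since `M` is closed, Cartan's formula gives
`L_U M = d(ι_U M) = -c⁻¹ d(dθ) = 0`, so `φ_s^* M = M`. As `φ_s^* M = M` means that
`M(φ_s x)(Dφ_s v, Dφ_s w) = M(x)(v, w)`, the form `M` cannot vanish at `φ_s x` unless it vanishes
at `x`. Hence every homeomorphism `φ_s` maps the support of `M` onto itself.
-/

section Flow

open Function Set

variable {E : Type*} [NormedAddCommGroup E] [NormedSpace ℝ E] {U : E → E}

theorem eq_of_isIntegralCurve_of_locallyLipschitz (hU : LocallyLipschitz U) {γ γ' : ℝ → E}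
    (hγ : IsIntegralCurve γ fun _ => U) (hγ' : IsIntegralCurve γ' fun _ => U) {t₀ : ℝ}
    (h₀ : γ t₀ = γ' t₀) : γ = γ' := by
  ext t
  obtain ⟨a, b, ht, ht₀⟩ : ∃ a b, t ∈ Ioo a b ∧ t₀ ∈ Ioo a b :=
    ⟨min t t₀ - 1, max t t₀ + 1, by grind, by grind⟩
  have hcompact : IsCompact (γ '' Icc a b ∪ γ' '' Icc a b) :=
    (isCompact_Icc.image hγ.continuous).union (isCompact_Icc.image hγ'.continuous)
  obtain ⟨K, hK⟩ :=
    LocallyLipschitzOn.exists_lipschitzOnWith_of_compact hcompact hU.locallyLipschitzOn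
  exact ODE_solution_unique_of_mem_Ioo (fun _ _ => hK) ht₀
    (fun r hr => ⟨hγ r, .inl (mem_image_of_mem γ (Ioo_subset_Icc_self hr))⟩)
    (fun r hr => ⟨hγ' r, .inr (mem_image_of_mem γ' (Ioo_subset_Icc_self hr))⟩) h₀ ht

/-- The flow formed by the integral curves of a locally Lipschitz vector field, the group law being
a consequence of uniqueness. -/
def flowOfIsIntegralCurve (hU : LocallyLipschitz U) (φ : ℝ → E → E) (hφ : Continuous ↿φ)
    (hφ₀ : φ 0 = id) (hcurve : ∀ x, IsIntegralCurve (φ · x) fun _ => U) : Flow ℝ E where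
  toFun := φ
  cont' := hφ
  map_add' s t x := congrFun (eq_of_isIntegralCurve_of_locallyLipschitz hU (t₀ := 0)
    ((hcurve x).comp_add t) (hcurve (φ t x)) (by simp [hφ₀])) s
  map_zero' := congrFun hφ₀

end Flow

section InterchangeOfDerivatives

open Filter Function Topology

variable {E F : Type*} [NormedAddCommGroup F]

theorem eventually_norm_le_of_isCompact_of_continuous {X Y : Type*} [TopologicalSpace X]
    [TopologicalSpace Y] {f : X → Y → F} (hf : Continuous ↿f) {K : Set Y} (hK : IsCompact K)
    (x₀ : X) : ∃ C, ∀ᶠ x in 𝓝 x₀, ∀ y ∈ K, ‖f x y‖ ≤ C := by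
  obtain ⟨C, hC⟩ := hK.exists_bound_of_continuousOn (f := f x₀) (by fun_prop)
  refine ⟨C + 1, hK.eventually_forall_of_forall_eventually fun y hy => ?_⟩
  have hlt : ∀ᶠ z in 𝓝 (x₀, y), ‖(↿f) z‖ < C + 1 :=
    hf.norm.continuousAt.eventually_lt_const ((hC y hy).trans_lt (lt_add_one C))
  exact hlt.mono fun _ hz => hz.le

variable [NormedAddCommGroup E] [NormedSpace ℝ E] [NormedSpace ℝ F]

theorem hasFDerivAt_intervalIntegral_of_continuous {f : E → ℝ → F} {f' : E → ℝ → E →L[ℝ] F}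
    (hf : ∀ x, Continuous (f x)) (hf' : Continuous ↿f')
    (hff' : ∀ x t, HasFDerivAt (f · t) (f' x t) x) (a b : ℝ) (x : E) :
    HasFDerivAt (fun y => ∫ t in a..b, f y t) (∫ t in a..b, f' x t) x := by
  obtain ⟨C, hC⟩ := eventually_norm_le_of_isCompact_of_continuous hf' isCompact_uIcc x
  have hf'x : Continuous (f' x) := by fun_prop
  exact intervalIntegral.hasFDerivAt_integral_of_dominated_of_fderiv_le hC
    (.of_forall fun y => (hf y).aestronglyMeasurable) ((hf x).intervalIntegrable a b)
    hf'x.aestronglyMeasurable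
    (.of_forall fun t ht y hy => hy t (Set.uIoc_subset_uIcc ht)) intervalIntegrable_const
    (.of_forall fun t _ y _ => hff' y t)

theorem hasDerivAt_fderiv_of_hasDerivAt [CompleteSpace F] {f g : ℝ → E → F}
    {g' : ℝ → E → E →L[ℝ] F} (hfg : ∀ t x, HasDerivAt (f · x) (g t x) t)
    (hg : ∀ x, Continuous (g · x)) (hg' : Continuous ↿g')
    (hgg' : ∀ t x, HasFDerivAt (g t) (g' t x) x) {t : ℝ} {x : E}
    (hft : DifferentiableAt ℝ (f t) x) :
    HasDerivAt (fun s => fderiv ℝ (f s) x) (g' t x) t := by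
  have hf_eq (s : ℝ) : f s = fun y => f t y + ∫ r in t..s, g r y := funext fun y => by
    rw [intervalIntegral.integral_eq_sub_of_hasDerivAt (fun r _ => hfg r y)
      ((hg y).intervalIntegrable t s), add_sub_cancel]
  have hintegral (s : ℝ) : HasFDerivAt (fun y => ∫ r in t..s, g r y) (∫ r in t..s, g' r x) x :=
    hasFDerivAt_intervalIntegral_of_continuous (f := fun y r => g r y)
      (f' := fun y r => g' r y) hg (by fun_prop) (fun y r => hgg' r y) t s x
  have hfderiv : (fun s => fderiv ℝ (f s) x) =
      fun s => fderiv ℝ (f t) x + ∫ r in t..s, g' r x := funext fun s => by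
    rw [hf_eq s]
    exact (hft.hasFDerivAt.add (hintegral s)).fderiv
  have hg'x : Continuous (g' · x) := by fun_prop
  rw [hfderiv]
  exact (hg'x.integral_hasStrictDerivAt t t).hasDerivAt.const_add _

end InterchangeOfDerivatives

section LieDerivative

open Function

variable {E F : Type*} [NormedAddCommGroup E] [NormedSpace ℝ E]
  [NormedAddCommGroup F] [NormedSpace ℝ F] {U : E → E} {B : E → E →L[ℝ] E →L[ℝ] F}

/-- Lie derivative of a field `B` of bilinear maps along a vector field `U`:
in coordinates, `(L_U B)_{μν} = U^λ ∂_λ B_{μν} + B_{λν} ∂_μ U^λ + B_{μλ} ∂_ν U^λ`. -/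
def lieDeriv2 (U : E → E) (B : E → E →L[ℝ] E →L[ℝ] F) (x v w : E) : F :=
  fderiv ℝ B x (U x) v w + B x (fderiv ℝ U x v) w + B x v (fderiv ℝ U x w)

section Pullback

variable [CompleteSpace E] {φ : ℝ → E → E}

theorem hasDerivAt_fderiv_flow (hU : ContDiff ℝ 1 U) (hφ : ContDiff ℝ 1 ↿φ)
    (hcurve : ∀ x, IsIntegralCurve (φ · x) fun _ => U) (s : ℝ) (x : E) :
    HasDerivAt (fun t => fderiv ℝ (φ t) x) (fderiv ℝ U (φ s x) ∘L fderiv ℝ (φ s) x) s := by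
  have hφ_diff (t : ℝ) : Differentiable ℝ (φ t) :=
    (hφ.comp (contDiff_prodMk_right t)).differentiable one_ne_zero
  have hdφ : Continuous ↿fun t y => fderiv ℝ (φ t) y :=
    Continuous.fderiv (f := fun q : ℝ × E => φ q.1) (n := 1)
      (hφ.comp (by fun_prop : ContDiff ℝ 1 fun q : (ℝ × E) × E => (q.1.1, q.2)))
      continuous_snd le_rfl
  exact hasDerivAt_fderiv_of_hasDerivAt (fun t y => hcurve y t)
    (fun y => hU.continuous.comp (hcurve y).continuous)
    (((hU.continuous_fderiv one_ne_zero).comp hφ.continuous).clm_comp hdφ)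
    (fun t y => (hU.differentiable one_ne_zero _).hasFDerivAt.comp y (hφ_diff t y).hasFDerivAt)
    (hφ_diff s x)

theorem hasDerivAt_flow_pullback (hU : ContDiff ℝ 1 U) (hφ : ContDiff ℝ 1 ↿φ)
    (hcurve : ∀ x, IsIntegralCurve (φ · x) fun _ => U) (hB : Differentiable ℝ B)
    (s : ℝ) (x v w : E) :
    HasDerivAt (fun t => B (φ t x) (fderiv ℝ (φ t) x v) (fderiv ℝ (φ t) x w))
      (lieDeriv2 U B (φ s x) (fderiv ℝ (φ s) x v) (fderiv ℝ (φ s) x w)) s := by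
  have hBφ : HasDerivAt (fun t => B (φ t x)) (fderiv ℝ B (φ s x) (U (φ s x))) s :=
    HasFDerivAt.comp_hasDerivAt (l := B) (f := (φ · x)) s (hB (φ s x)).hasFDerivAt (hcurve x s)
  have hdφ (u : E) : HasDerivAt (fun t => fderiv ℝ (φ t) x u)
      (fderiv ℝ U (φ s x) (fderiv ℝ (φ s) x u)) s := by
    simpa using (hasDerivAt_fderiv_flow hU hφ hcurve s x).clm_apply (hasDerivAt_const s u)
  simpa [lieDeriv2] using (hBφ.clm_apply (hdφ v)).clm_apply (hdφ w)

theorem flow_pullback_eq_of_lieDeriv2_eq_zero (hU : ContDiff ℝ 1 U) (hφ : ContDiff ℝ 1 ↿φ)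
    (hφ₀ : φ 0 = id) (hcurve : ∀ x, IsIntegralCurve (φ · x) fun _ => U)
    (hB : Differentiable ℝ B) (hLie : ∀ x v w, lieDeriv2 U B x v w = 0) (s : ℝ) (x v w : E) :
    B (φ s x) (fderiv ℝ (φ s) x v) (fderiv ℝ (φ s) x w) = B x v w := by
  have hderiv (t : ℝ) := hasDerivAt_flow_pullback hU hφ hcurve hB t x v w
  have hconst := is_const_of_deriv_eq_zero (fun t => (hderiv t).differentiableAt)
    (fun t => (hderiv t).deriv.trans (hLie _ _ _)) s 0
  simpa [hφ₀] using hconst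

theorem isInvariant_support_of_lieDeriv2_eq_zero (hU : ContDiff ℝ 1 U)
    (hφ : ContDiff ℝ 1 ↿φ) (hφ₀ : φ 0 = id)
    (hcurve : ∀ x, IsIntegralCurve (φ · x) fun _ => U)
    (hB : Differentiable ℝ B) (hLie : ∀ x v w, lieDeriv2 U B x v w = 0) :
    IsInvariant φ (support B) := fun s x hx hzero => hx <| by
  ext v w
  simp [← flow_pullback_eq_of_lieDeriv2_eq_zero hU hφ hφ₀ hcurve hB hLie s x v w, hzero]

theorem image_tsupport_eq_of_lieDeriv2_eq_zero (hU : ContDiff ℝ 1 U)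
    (hφ : ContDiff ℝ 1 ↿φ) (hφ₀ : φ 0 = id)
    (hcurve : ∀ x, IsIntegralCurve (φ · x) fun _ => U)
    (hB : Differentiable ℝ B) (hLie : ∀ x v w, lieDeriv2 U B x v w = 0) (s : ℝ) :
    φ s '' tsupport B = tsupport B := by
  have hinvariant : IsInvariant φ (tsupport B) := fun t =>
    (isInvariant_support_of_lieDeriv2_eq_zero hU hφ hφ₀ hcurve hB hLie t).closure
      (hφ.continuous.uncurry_left t)
  exact (flowOfIsIntegralCurve hU.locallyLipschitz φ hφ.continuous hφ₀
    hcurve).isInvariant_iff_image_eq (tsupport B) |>.1 hinvariant s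

end Pullback

theorem hasFDerivAt_apply_apply {x : E} (hB : DifferentiableAt ℝ B x) (v w : E) :
    HasFDerivAt (fun y => B y v w) ((fderiv ℝ B x).flip v |>.flip w) x := by
  simpa using (hB.hasFDerivAt.clm_apply (hasFDerivAt_const v x)).clm_apply (hasFDerivAt_const w x)

theorem fderiv_apply_apply_of_skew {x : E} (hB : DifferentiableAt ℝ B x)
    (hskew : ∀ y v w, B y v w = -B y w v) (u v w : E) :
    fderiv ℝ B x u v w = -fderiv ℝ B x u w v := by
  have hneg := (hasFDerivAt_apply_apply hB w v).neg.congr_of_eventuallyEq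
    (.of_forall fun y => hskew y v w)
  exact DFunLike.congr_fun ((hasFDerivAt_apply_apply hB v w).unique hneg) u

theorem fderiv_contraction {x : E} (hU : DifferentiableAt ℝ U x) (hB : DifferentiableAt ℝ B x)
    (v w : E) :
    fderiv ℝ (fun y => B y (U y)) x v w =
      fderiv ℝ B x v (U x) w + B x (fderiv ℝ U x v) w := by
  rw [(hB.hasFDerivAt.clm_apply hU.hasFDerivAt).fderiv]
  simp [add_comm]

theorem cartan_formula_of_closed {x : E} (hU : DifferentiableAt ℝ U x)
    (hB : DifferentiableAt ℝ B x) (hskew : ∀ y v w, B y v w = -B y w v)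
    (hclosed : ∀ u v w, fderiv ℝ B x u v w + fderiv ℝ B x v w u + fderiv ℝ B x w u v = 0)
    (v w : E) :
    lieDeriv2 U B x v w =
      fderiv ℝ (fun y => B y (U y)) x v w - fderiv ℝ (fun y => B y (U y)) x w v := by
  have htransport : fderiv ℝ B x (U x) v w = fderiv ℝ B x v (U x) w - fderiv ℝ B x w (U x) v := by
    rw [fderiv_apply_apply_of_skew hB hskew v (U x) w, ← sub_eq_zero, ← hclosed (U x) v w]
    abel
  rw [lieDeriv2, htransport, hskew x v, fderiv_contraction hU hB, fderiv_contraction hU hB]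
  abel

end LieDerivative

section Vorticity

open Function

variable {E F : Type*} [NormedAddCommGroup E] [NormedSpace ℝ E]
  [NormedAddCommGroup F] [NormedSpace ℝ F] {U : E → E} {α : E → E →L[ℝ] F} {θ : E → F}

/-- The vorticity two-form `dα` of a covector field `α`, `dα(v, w) = (D_v α) w - (D_w α) v`,
encoded as a field of bilinear maps. -/
def vorticity (α : E → E →L[ℝ] F) (x : E) : E →L[ℝ] E →L[ℝ] F :=
  fderiv ℝ α x - (fderiv ℝ α x).flip

theorem vorticity_apply (α : E → E →L[ℝ] F) (x v w : E) :
    vorticity α x v w = fderiv ℝ α x v w - fderiv ℝ α x w v := rfl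

theorem vorticity_swap (α : E → E →L[ℝ] F) (x v w : E) :
    vorticity α x v w = -vorticity α x w v := by
  simp only [vorticity_apply, neg_sub]

theorem differentiableAt_vorticity {x : E} (hα : DifferentiableAt ℝ (fderiv ℝ α) x) :
    DifferentiableAt ℝ (vorticity α) x := by
  let flip : (E →L[ℝ] E →L[ℝ] F) →L[ℝ] E →L[ℝ] E →L[ℝ] F := ContinuousLinearMap.flipₗᵢ ℝ E E F
  have hflip : DifferentiableAt ℝ (fun y => flip (fderiv ℝ α y)) x :=
    DifferentiableAt.comp (𝕜 := ℝ) (F := E →L[ℝ] E →L[ℝ] F) (G := E →L[ℝ] E →L[ℝ] F) x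
      flip.differentiableAt hα
  exact DifferentiableAt.sub (𝕜 := ℝ) (F := E →L[ℝ] E →L[ℝ] F) hα hflip

theorem fderiv_vorticity_apply {x : E} (hα : DifferentiableAt ℝ (fderiv ℝ α) x) (u v w : E) :
    fderiv ℝ (vorticity α) x u v w =
      fderiv ℝ (fderiv ℝ α) x u v w - fderiv ℝ (fderiv ℝ α) x u w v :=
  DFunLike.congr_fun ((hasFDerivAt_apply_apply (differentiableAt_vorticity hα) v w).unique
    ((hasFDerivAt_apply_apply hα v w).sub (hasFDerivAt_apply_apply hα w v))) u

theorem vorticity_closed {x : E} (hα : ContDiffAt ℝ 2 α x) (u v w : E) :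
    fderiv ℝ (vorticity α) x u v w + fderiv ℝ (vorticity α) x v w u +
      fderiv ℝ (vorticity α) x w u v = 0 := by
  have hsymm : IsSymmSndFDerivAt ℝ α x := hα.isSymmSndFDerivAt (by simp)
  have hdα : DifferentiableAt ℝ (fderiv ℝ α) x :=
    (hα.fderiv_right (m := 1) le_rfl).differentiableAt one_ne_zero
  simp only [fderiv_vorticity_apply hdα]
  rw [hsymm u v, hsymm v w, hsymm w u]
  abel

theorem differentiable_vorticity (hα : ContDiff ℝ 2 α) : Differentiable ℝ (vorticity α) :=
  fun x => differentiableAt_vorticity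
    ((hα.fderiv_right (m := 1) le_rfl).differentiable one_ne_zero x)

theorem lieDeriv2_vorticity_eq_zero (hU : Differentiable ℝ U) (hα : ContDiff ℝ 2 α)
    (hθ : ∀ x, HasFDerivAt θ (vorticity α x (U x)) x) (x v w : E) :
    lieDeriv2 U (vorticity α) x v w = 0 := by
  have hM := differentiable_vorticity hα x
  rw [cartan_formula_of_closed (hU x) hM (vorticity_swap α) (vorticity_closed hα.contDiffAt),
    sub_eq_zero]
  exact second_derivative_symmetric hθ (hM.clm_apply (hU x)).hasFDerivAt v w

theorem vortex_support_transport_general [CompleteSpace E] (hU : ContDiff ℝ 1 U)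
    {φ : ℝ → E → E} (hφ : ContDiff ℝ 1 ↿φ) (hφ₀ : φ 0 = id)
    (hcurve : ∀ x, IsIntegralCurve (φ · x) fun _ => U) (hα : ContDiff ℝ 2 α)
    (hθ : ∀ x, HasFDerivAt θ (vorticity α x (U x)) x) (Ξ : Set E) (s : ℝ) :
    tsupport (vorticity α) ∩ φ s '' Ξ = φ s '' (tsupport (vorticity α) ∩ Ξ) := by
  have hinj : Injective (φ s) := (flowOfIsIntegralCurve hU.locallyLipschitz φ hφ.continuous
    hφ₀ hcurve).toHomeomorph s |>.injective
  rw [Set.image_inter hinj, image_tsupport_eq_of_lieDeriv2_eq_zero hU hφ hφ₀ hcurve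
    (differentiable_vorticity hα)
    (lieDeriv2_vorticity_eq_zero (hU.differentiable one_ne_zero) hα hθ)]

end Vorticity

section Coordinates

theorem continuousLinearMap_ext_single {ι F : Type*} [Finite ι] [DecidableEq ι]
    [AddCommGroup F] [Module ℝ F] [TopologicalSpace F] {L L' : (ι → ℝ) →L[ℝ] F}
    (h : ∀ i, L (Pi.single i 1) = L' (Pi.single i 1)) : L = L' :=
  ContinuousLinearMap.coe_injective <| (Pi.basisFun ℝ ι).ext fun i => by simpa using h i

theorem bilin_eq_zero_iff_single {ι κ F : Type*} [Finite ι] [Finite κ] [DecidableEq ι]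
    [DecidableEq κ] [NormedAddCommGroup F] [NormedSpace ℝ F]
    {B : (ι → ℝ) →L[ℝ] (κ → ℝ) →L[ℝ] F} :
    B = 0 ↔ ∀ i j, B (Pi.single i 1) (Pi.single j 1) = 0 :=
  ⟨fun h => by simp [h],
    fun h => continuousLinearMap_ext_single fun i => continuousLinearMap_ext_single (h i)⟩

variable {E ι : Type*} [Fintype ι] {P : E → ι → ℝ}

/-- The covector field with components `P_ν`, as a field of linear functionals. -/
def covectorField (P : E → ι → ℝ) (x : E) : (ι → ℝ) →L[ℝ] ℝ :=
  ∑ ν, P x ν • ContinuousLinearMap.proj (φ := fun _ : ι => ℝ) ν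

theorem covectorField_apply_single [DecidableEq ι] (P : E → ι → ℝ) (x : E) (ν : ι) :
    covectorField P x (Pi.single ν 1) = P x ν := by
  simp [covectorField, Pi.single_apply]

variable [NormedAddCommGroup E] [NormedSpace ℝ E]

theorem contDiff_covectorField {n : WithTop ℕ∞} (hP : ContDiff ℝ n P) :
    ContDiff ℝ n (covectorField P) := by
  unfold covectorField
  fun_prop

theorem differentiableAt_covectorField {x : E} (hP : DifferentiableAt ℝ P x) :
    DifferentiableAt ℝ (covectorField P) x := by
  unfold covectorField
  fun_prop

theorem fderiv_covectorField_apply_single [DecidableEq ι] {x : E} (hP : DifferentiableAt ℝ P x)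
    (v : E) (ν : ι) :
    fderiv ℝ (covectorField P) x v (Pi.single ν 1) = fderiv ℝ (fun y => P y ν) x v := by
  simp only [← covectorField_apply_single P]
  rw [fderiv_clm_apply (differentiableAt_covectorField hP) (differentiableAt_const _)]
  simp

end Coordinates

section MinkowskiSpace

variable {P : V4 → V4} {M : Fin 4 → Fin 4 → V4 → ℝ}

theorem vorticity_covectorField_single {x : V4} (hP : DifferentiableAt ℝ P x) (μ ν : Fin 4) :
    vorticity (covectorField P) x (Pi.single μ 1) (Pi.single ν 1) =
      pd4 μ (fun y => P y ν) x - pd4 ν (fun y => P y μ) x := by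
  rw [vorticity_apply, fderiv_covectorField_apply_single hP,
    fderiv_covectorField_apply_single hP, pd4, pd4]

theorem support_vorticity_covectorField (hP : Differentiable ℝ P)
    (hM : ∀ μ ν x, M μ ν x = pd4 μ (fun y => P y ν) x - pd4 ν (fun y => P y μ) x) :
    Function.support (vorticity (covectorField P)) = {x | ∃ μ ν, M μ ν x ≠ 0} := by
  ext x
  simp [bilin_eq_zero_iff_single, vorticity_covectorField_single (hP x), hM]

theorem hasFDerivAt_of_equation_of_motion {U : V4 → V4} {θ : V4 → ℝ} {k : ℝ}
    (hP : Differentiable ℝ P)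
    (hM : ∀ μ ν x, M μ ν x = pd4 μ (fun y => P y ν) x - pd4 ν (fun y => P y μ) x)
    (hθ : Differentiable ℝ θ)
    (heqm : ∀ x ν, (∑ μ, U x μ * M μ ν x) = k * pd4 ν θ x) (x : V4) :
    HasFDerivAt (fun y => k * θ y) (vorticity (covectorField P) x (U x)) x := by
  suffices hd : vorticity (covectorField P) x (U x) = k • fderiv ℝ θ x by
    rw [hd]
    exact (hθ x).hasFDerivAt.const_mul k
  refine continuousLinearMap_ext_single fun ν => ?_
  calc vorticity (covectorField P) x (U x) (Pi.single ν 1)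
      = ∑ μ, U x μ * vorticity (covectorField P) x (Pi.single μ 1) (Pi.single ν 1) := by
        conv_lhs => rw [pi_eq_sum_univ' (U x)]
        simp
    _ = ∑ μ, U x μ * M μ ν x := by simp only [vorticity_covectorField_single (hP x), hM]
    _ = k * pd4 ν θ x := heqm x ν

end MinkowskiSpace

/-- Vortex motion / frozen-in support: under the barotropic equation of motion, the
    support of the vorticity intersected with the transported plane φ_s(Ξ₀) is the
    transport of its initial intersection S₀ = supp M ∩ Ξ₀. -/
theorem vortex_support_transport (c : ℝ) (hc : 0 < c)
    (U : V4 → V4) (hU : ContDiff ℝ 1 U)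
    (φ : ℝ → V4 → V4) (hφ : ContDiff ℝ 1 (fun q : ℝ × V4 => φ q.1 q.2))
    (hφ0 : φ 0 = id)
    (hflow : ∀ s x, HasDerivAt (fun s => φ s x) (U (φ s x)) s)
    (hdiffeo : ∀ s, Function.Bijective (φ s))
    (P : V4 → V4) (hP : ContDiff ℝ 2 P)
    (θ : V4 → ℝ) (hθ : ContDiff ℝ 2 θ)
    (M : Fin 4 → Fin 4 → V4 → ℝ)
    (hM : ∀ μ ν x, M μ ν x = pd4 μ (fun y => P y ν) x - pd4 ν (fun y => P y μ) x)
    (heqm : ∀ x ν, (∑ μ, U x μ * M μ ν x) = -c⁻¹ * pd4 ν θ x) :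
    ∀ s : ℝ,
      closure {x : V4 | ∃ μ ν, M μ ν x ≠ 0} ∩ (φ s '' {x : V4 | x 0 = 0})
        = φ s '' (closure {x : V4 | ∃ μ ν, M μ ν x ≠ 0} ∩ {x : V4 | x 0 = 0}) := by
  have hP' := hP.differentiable two_ne_zero
  rw [← support_vorticity_covectorField hP' hM]
  exact vortex_support_transport_general hU hφ hφ0 (fun x s => hflow s x)
    (contDiff_covectorField hP)
    (hasFDerivAt_of_equation_of_motion hP' hM (hθ.differentiable two_ne_zero) heqm) _
end
end
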